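/- Let (A*,w*) be an optimal solution to the maximin support instance with t*=supp_{w*}(A*), and let (A,w) be a balanced solution with |A|≤k and A≠A*. Then for each a with 0≤a≤1 there exists a subset N(a)⊆N of voters such that: (1) every voter in N(a) has a neighbor in A*∖A; (2) every n∈N(a) satisfies min_{c∈A∩C_n} supp_w(c) ≥ a·t* (with the minimum over the empty set equal to ∞); (3) ∑_{n∈N(a)} s_n ≥ |A*∖A|·(1−a)·t*; and (4) for any b with a≤b≤1, N(b)⊆N(a), and a voter n∈N(a) belongs to N(b) if and only if min_{c∈A∩C_n} supp_w(c) ≥ b·t*. -/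

import Mathlib

/-!
Take for `N(a)` the largest possible choice: all voters with a neighbour in `A* \ A` all of whose
neighbours in `A` have support at least `a t*`. Everything but the bound on the total vote
strength is then immediate.

For the bound, let `L` be the set of members of `A` with support below `a t*`, and `M` the set of
voters with a neighbour in `L`. Since `w` is balanced, each voter in `M` spends her whole strength
on `L` (`BalancedWeight.spends_on_low`): unspent strength could increase the total support, and
weight on a member outside `L` could be shifted to a member of `L`, decreasing the sum of squares.
Hence `s(M) ≤ supp_w(L) ≤ a t* |L|`. On the other hand, under `w*` each member of
`(A* \ A) ∪ (A* ∩ L)` has support at least `t*`, and this support comes only from voters in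
`N(a)` and `M`, so `t* (|A* \ A| + |A* ∩ L|) ≤ s(N(a)) + a t* |L|`. The bound follows from
`|L \ A*| ≤ |A \ A*| ≤ |A* \ A|` and `0 ≤ a ≤ 1`.
-/

open Finset

section Defs

variable {V Cand : Type*} [Fintype V] [Fintype Cand] [DecidableEq V] [DecidableEq Cand]

/-- The set `C_n` of candidates approved by voter `n`. -/
def approves (edge : V → Cand → Prop) [∀ n c, Decidable (edge n c)] (n : V) : Finset Cand :=
  Finset.univ.filter (fun c => edge n c)

/-- The set `N_c` of voters approving candidate `c`. -/
def approvers (edge : V → Cand → Prop) [∀ n c, Decidable (edge n c)] (c : Cand) : Finset V :=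
  Finset.univ.filter (fun n => edge n c)

/-- Feasibility of an edge-weight vector: nonnegative, supported on the edges of the
approval graph, and the total weight assigned by each voter is at most her vote strength. -/
def Feasible (edge : V → Cand → Prop) [∀ n c, Decidable (edge n c)]
    (s : V → ℝ) (w : V → Cand → ℝ) : Prop :=
  (∀ n c, 0 ≤ w n c) ∧ (∀ n c, ¬ edge n c → w n c = 0) ∧
    ∀ n, ∑ c ∈ approves edge n, w n c ≤ s n

/-- The support `supp_w(c)` of a candidate. -/
noncomputable def supp (edge : V → Cand → Prop) [∀ n c, Decidable (edge n c)]
    (w : V → Cand → ℝ) (c : Cand) : ℝ :=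
  ∑ n ∈ approvers edge c, w n c

/-- `supp_w(A) = min_{c ∈ A} supp_w(c)`, valued in `EReal` with the convention
`supp_w(∅) = ∞`. -/
noncomputable def suppMin (edge : V → Cand → Prop) [∀ n c, Decidable (edge n c)]
    (w : V → Cand → ℝ) (A : Finset Cand) : EReal :=
  A.inf (fun c => (supp edge w c : EReal))

/-- `w` is balanced for `A`: among feasible vectors it maximizes the sum of member supports
and, subject to that, minimizes the sum of squared member supports. -/
def BalancedWeight (edge : V → Cand → Prop) [∀ n c, Decidable (edge n c)] (s : V → ℝ)
    (A : Finset Cand) (w : V → Cand → ℝ) : Prop :=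
  Feasible edge s w ∧
  (∀ w', Feasible edge s w' → ∑ c ∈ A, supp edge w' c ≤ ∑ c ∈ A, supp edge w c) ∧
  (∀ w', Feasible edge s w' → ∑ c ∈ A, supp edge w' c = ∑ c ∈ A, supp edge w c →
    ∑ c ∈ A, (supp edge w c) ^ 2 ≤ ∑ c ∈ A, (supp edge w' c) ^ 2)

/-- The slack of voter `n` at threshold `t`, relative to the solution `(A, w)`. -/
noncomputable def slack (edge : V → Cand → Prop) [∀ n c, Decidable (edge n c)] (s : V → ℝ)
    (A : Finset Cand) (w : V → Cand → ℝ) (n : V) (t : ℝ) : ℝ :=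
  s n - ∑ c ∈ A ∩ approves edge n, w n c * min 1 (t / supp edge w c)

/-- The pre-score of an unelected candidate `c'` at threshold `t`. -/
noncomputable def prescore (edge : V → Cand → Prop) [∀ n c, Decidable (edge n c)] (s : V → ℝ)
    (A : Finset Cand) (w : V → Cand → ℝ) (c' : Cand) (t : ℝ) : ℝ :=
  ∑ n ∈ approvers edge c', slack edge s A w n t

/-- `score(c') = max { t ≥ 0 : prescore(c', t) ≥ t }`. -/
noncomputable def score (edge : V → Cand → Prop) [∀ n c, Decidable (edge n c)] (s : V → ℝ)
    (A : Finset Cand) (w : V → Cand → ℝ) (c' : Cand) : ℝ :=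
  sSup {t : ℝ | 0 ≤ t ∧ t ≤ prescore edge s A w c' t}

/-- Proportional justified representation for a committee of target size `k`. -/
def PJR (edge : V → Cand → Prop) [∀ n c, Decidable (edge n c)] (s : V → ℝ)
    (k : ℕ) (A : Finset Cand) : Prop :=
  ¬ ∃ (N' : Finset V) (r : ℕ), 0 < r ∧ r ≤ k ∧
      (r : ℝ) / k * ∑ n, s n ≤ ∑ n ∈ N', s n ∧
      r ≤ (N'.inf (approves edge)).card ∧
      (A ∩ N'.sup (approves edge)).card < r

/-- Parametric proportional justified representation (`t`-PJR). -/
def tPJR (edge : V → Cand → Prop) [∀ n c, Decidable (edge n c)] (s : V → ℝ)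
    (A : Finset Cand) (t : ℝ) : Prop :=
  ¬ ∃ (N' : Finset V) (r : ℕ), 0 < r ∧ r ≤ A.card ∧
      (r : ℝ) * t ≤ ∑ n ∈ N', s n ∧
      r ≤ (N'.inf (approves edge)).card ∧
      (A ∩ N'.sup (approves edge)).card < r

end Defs

/-! ### Feasible weights and row updates -/

section Aux

variable {V Cand : Type*} [Fintype V] [Fintype Cand] [DecidableEq V] [DecidableEq Cand]
  {edge : V → Cand → Prop} [∀ n c, Decidable (edge n c)] {s : V → ℝ} {w : V → Cand → ℝ}

lemma supp_eq_sum (h : ∀ n c, ¬ edge n c → w n c = 0) (c : Cand) :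
    supp edge w c = ∑ n, w n c := by
  unfold supp approvers
  rw [Finset.sum_filter]
  refine Finset.sum_congr rfl fun n _ => ?_
  split_ifs with he
  · rfl
  · exact (h n c he).symm

lemma sum_approves_eq {r : Cand → ℝ} {n : V} (h : ∀ c, ¬ edge n c → r c = 0) :
    ∑ c ∈ approves edge n, r c = ∑ c, r c := by
  unfold approves
  rw [Finset.sum_filter]
  refine Finset.sum_congr rfl fun c _ => ?_
  split_ifs with he
  · rfl
  · exact (h c he).symm

lemma Feasible.sum_le (hw : Feasible edge s w) (n : V) : ∑ c, w n c ≤ s n := by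
  rw [← sum_approves_eq (hw.2.1 n)]
  exact hw.2.2 n

lemma Feasible.sum_subset_le (hw : Feasible edge s w) (n : V) (B : Finset Cand) :
    ∑ c ∈ B, w n c ≤ s n :=
  (Finset.sum_le_sum_of_subset_of_nonneg (Finset.subset_univ B)
    fun c _ _ => hw.1 n c).trans (hw.sum_le n)

/-- Replacing the weights of a single voter by any admissible row keeps feasibility and changes
the supports by the difference of the rows. -/
lemma Feasible.update (hw : Feasible edge s w) (n : V) (r : Cand → ℝ) (h0 : ∀ c, 0 ≤ r c)
    (he : ∀ c, ¬ edge n c → r c = 0) (hsum : ∑ c, r c ≤ s n) :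
    Feasible edge s (Function.update w n r) ∧
      ∀ c, supp edge (Function.update w n r) c = supp edge w c + (r c - w n c) := by
  have hE : ∀ m c, ¬ edge m c → Function.update w n r m c = 0 := by
    intro m c hmc
    by_cases hm : m = n
    · subst hm; simpa using he c hmc
    · simpa [Function.update_of_ne hm] using hw.2.1 m c hmc
  refine ⟨⟨fun m c => ?_, hE, fun m => ?_⟩, fun c => ?_⟩
  · by_cases hm : m = n
    · subst hm; simpa using h0 c
    · simpa [Function.update_of_ne hm] using hw.1 m c
  · by_cases hm : m = n
    · subst hm
      rw [sum_approves_eq (hE m)]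
      simpa using hsum
    · simpa [Function.update_of_ne hm] using hw.2.2 m
  · rw [supp_eq_sum hE, supp_eq_sum hw.2.1,
      ← Finset.add_sum_erase _ (fun m => Function.update w n r m c) (Finset.mem_univ n),
      ← Finset.add_sum_erase _ (fun m => w m c) (Finset.mem_univ n)]
    have : ∑ m ∈ Finset.univ.erase n, Function.update w n r m c
        = ∑ m ∈ Finset.univ.erase n, w m c :=
      Finset.sum_congr rfl fun m hm => by
        rw [Function.update_of_ne (Finset.ne_of_mem_erase hm)]
    simp only [this, Function.update_self]
    ring

/-! ### Exchange properties of balanced weights -/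

/-- A voter with a neighbour in `A` spends her whole strength on `A`. -/
lemma BalancedWeight.spends_all {A : Finset Cand} (hb : BalancedWeight edge s A w) {n : V}
    {c : Cand} (hc : c ∈ A) (hnc : edge n c) : s n ≤ ∑ d ∈ A, w n d := by
  by_contra! hlt
  -- Withdraw the weight outside `A` and give all of the unspent strength to `c`.
  let r : Cand → ℝ := fun d =>
    if d ∈ A then w n d + (if d = c then s n - ∑ d ∈ A, w n d else 0) else 0
  have hrA : ∑ d ∈ A, r d = s n := by
    have : ∑ d ∈ A, r d
        = ∑ d ∈ A, (w n d + (if d = c then s n - ∑ d ∈ A, w n d else 0)) :=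
      Finset.sum_congr rfl fun d hd => by simp [r, hd]
    rw [this, Finset.sum_add_distrib, Finset.sum_ite_eq' A c, if_pos hc]
    ring
  obtain ⟨hf, hsupp⟩ := hb.1.update n r
    (fun d => by
      have := hb.1.1 n d
      simp only [r]
      split_ifs <;> linarith)
    (fun d hd => by
      have hdc : d ≠ c := fun h => hd (h ▸ hnc)
      simp [r, hdc, hb.1.2.1 n d hd])
    (by
      rw [← hrA]
      refine (Finset.sum_subset (Finset.subset_univ A) fun d _ hd => ?_).ge
      simp [r, hd])
  have h := hb.2.1 _ hf
  simp only [hsupp, Finset.sum_add_distrib, Finset.sum_sub_distrib, hrA] at h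
  linarith

/-- In a balanced solution, a voter gives no weight to a member if she approves another member
with smaller support. -/
lemma BalancedWeight.eq_zero_of_supp_lt {A : Finset Cand} (hb : BalancedWeight edge s A w) {n : V}
    {c d : Cand} (hc : c ∈ A) (hd : d ∈ A) (hnc : edge n c)
    (hlt : supp edge w c < supp edge w d) : w n d = 0 := by
  by_contra hne
  have hpos : 0 < w n d := lt_of_le_of_ne (hb.1.1 n d) (Ne.symm hne)
  have hcd : c ≠ d := fun h => by simp [h] at hlt
  have hnd : edge n d := by
    by_contra h
    exact hne (hb.1.2.1 n d h)
  -- With gap `g`, shifting `ε` changes the sum of squares by `2 ε (ε - g)`.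
  obtain ⟨ε, hε, hεw, hεg⟩ : ∃ ε : ℝ, 0 < ε ∧ ε ≤ w n d ∧
      ε < supp edge w d - supp edge w c := by
    refine ⟨min (w n d) ((supp edge w d - supp edge w c) / 2), ?_, min_le_left _ _, ?_⟩
    · exact lt_min hpos (by linarith)
    · exact (min_le_right _ _).trans_lt (by linarith)
  let δ : Cand → ℝ := fun e => (if e = c then ε else 0) - (if e = d then ε else 0)
  obtain ⟨hf, hsupp⟩ := hb.1.update n (fun e => w n e + δ e)
    (fun e => by
      have := hb.1.1 n e
      by_cases h : e = d
      · subst h; simp only [δ, hcd.symm, if_true, if_false]; linarith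
      · simp only [δ, h, if_false]; split_ifs <;> linarith)
    (fun e he => by
      have h1 : e ≠ c := fun h => he (h ▸ hnc)
      have h2 : e ≠ d := fun h => he (h ▸ hnd)
      simp [δ, h1, h2, hb.1.2.1 n e he])
    (by
      have : ∑ e, δ e = 0 := by simp [δ, Finset.sum_sub_distrib]
      rw [Finset.sum_add_distrib, this, add_zero]
      exact hb.1.sum_le n)
  have hδ : ∑ e ∈ A, δ e = 0 := by simp [δ, Finset.sum_sub_distrib, hc, hd]
  have h := hb.2.2 _ hf (by
    simp only [hsupp, add_sub_cancel_left, Finset.sum_add_distrib, hδ, add_zero])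
  simp only [hsupp, add_sub_cancel_left] at h
  have hsq : ∑ e ∈ A, (supp edge w e + δ e) ^ 2 = ∑ e ∈ A, (supp edge w e) ^ 2
      + ((2 * supp edge w c * ε + ε ^ 2) + (-(2 * supp edge w d * ε) + ε ^ 2)) := by
    have : ∀ e ∈ A, (supp edge w e + δ e) ^ 2 = (supp edge w e) ^ 2
        + ((if e = c then 2 * supp edge w c * ε + ε ^ 2 else 0)
          + (if e = d then -(2 * supp edge w d * ε) + ε ^ 2 else 0)) := by
      intro e _
      by_cases h1 : e = c
      · subst h1; simp only [δ, hcd, if_true, if_false]; ring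
      · by_cases h2 : e = d
        · subst h2; simp only [δ, hcd.symm, if_true, if_false]; ring
        · simp [δ, h1, h2]
    rw [Finset.sum_congr rfl this, Finset.sum_add_distrib, Finset.sum_add_distrib,
      Finset.sum_ite_eq' A c, Finset.sum_ite_eq' A d, if_pos hc, if_pos hd]
  rw [hsq] at h
  nlinarith

/-- A voter approving a member with support below `t` spends her whole strength on such
members. -/
lemma BalancedWeight.spends_on_low {A : Finset Cand} (hb : BalancedWeight edge s A w) {n : V}
    {c : Cand} {t : ℝ} (hc : c ∈ A) (hnc : edge n c) (hct : supp edge w c < t) :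
    s n ≤ ∑ d ∈ A with supp edge w d < t, w n d := by
  refine (hb.spends_all hc hnc).trans_eq ?_
  rw [Finset.sum_filter]
  refine Finset.sum_congr rfl fun d hd => ?_
  split_ifs with h
  · rfl
  · exact hb.eq_zero_of_supp_lt hc hd hnc (hct.trans_le (not_lt.mp h))

end Aux

/-! ### The voter family -/

theorem exists_high_slack_voter_family
    {V Cand : Type*} [Fintype V] [Fintype Cand] [DecidableEq V] [DecidableEq Cand]
    (edge : V → Cand → Prop) [∀ n c, Decidable (edge n c)]
    (s : V → ℝ) (hs : ∀ n, 0 ≤ s n) (k : ℕ) (hk : 0 < k)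
    (Astar : Finset Cand) (wstar : V → Cand → ℝ) (tstar : ℝ)
    (hwstar : Feasible edge s wstar) (hAstar : Astar.card = k)
    (htstar : suppMin edge wstar Astar = (tstar : EReal))
    (hopt : ∀ (B : Finset Cand) (v : V → Cand → ℝ), Feasible edge s v → B.card = k →
      suppMin edge v B ≤ suppMin edge wstar Astar)
    (A : Finset Cand) (w : V → Cand → ℝ)
    (hbal : BalancedWeight edge s A w) (hAk : A.card ≤ k) (hne : A ≠ Astar) :
    ∃ Nfam : ℝ → Finset V, ∀ a : ℝ, 0 ≤ a → a ≤ 1 →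
      (∀ n ∈ Nfam a, ∃ c ∈ Astar \ A, edge n c) ∧
      (∀ n ∈ Nfam a, ∀ c ∈ A ∩ approves edge n, a * tstar ≤ supp edge w c) ∧
      (((Astar \ A).card : ℝ) * (1 - a) * tstar ≤ ∑ n ∈ Nfam a, s n) ∧
      (∀ b : ℝ, a ≤ b → b ≤ 1 →
        Nfam b ⊆ Nfam a ∧
        ∀ n ∈ Nfam a, (n ∈ Nfam b ↔ ∀ c ∈ A ∩ approves edge n, b * tstar ≤ supp edge w c)) := by
  have ht : ∀ c ∈ Astar, tstar ≤ supp edge wstar c := by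
    intro c hc
    have h : suppMin edge wstar Astar ≤ (supp edge wstar c : EReal) := Finset.inf_le hc
    rw [htstar] at h
    exact_mod_cast h
  have ht0 : 0 ≤ tstar := by
    have h : ((0 : ℝ) : EReal) ≤ suppMin edge wstar Astar := by
      refine Finset.le_inf fun c _ => ?_
      exact_mod_cast Finset.sum_nonneg fun n _ => hwstar.1 n c
    rw [htstar] at h
    exact_mod_cast h
  refine ⟨fun a => {n | (∃ c ∈ Astar \ A, edge n c) ∧
    ∀ c ∈ A ∩ approves edge n, a * tstar ≤ supp edge w c}, fun a ha0 ha1 => ⟨?_, ?_, ?_, ?_⟩⟩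
  · intro n hn
    exact (Finset.mem_filter.mp hn).2.1
  · intro n hn
    exact (Finset.mem_filter.mp hn).2.2
  · set Na : Finset V := {n | (∃ c ∈ Astar \ A, edge n c) ∧
      ∀ c ∈ A ∩ approves edge n, a * tstar ≤ supp edge w c} with hNa
    set L : Finset Cand := {c ∈ A | supp edge w c < a * tstar} with hL
    let M : Finset V := {n | ∃ c ∈ L, edge n c}
    have hM : ∑ n ∈ M, s n ≤ L.card * (a * tstar) := by
      calc ∑ n ∈ M, s n ≤ ∑ n ∈ M, ∑ d ∈ L, w n d := by
            refine Finset.sum_le_sum fun n hn => ?_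
            obtain ⟨c, hc, hnc⟩ := (Finset.mem_filter.mp hn).2
            obtain ⟨hcA, hct⟩ := Finset.mem_filter.mp hc
            exact hbal.spends_on_low hcA hnc hct
        _ ≤ ∑ n, ∑ d ∈ L, w n d :=
            Finset.sum_le_sum_of_subset_of_nonneg (Finset.subset_univ _)
              fun n _ _ => Finset.sum_nonneg fun d _ => hbal.1.1 n d
        _ = ∑ d ∈ L, supp edge w d := by
            rw [Finset.sum_comm]
            exact Finset.sum_congr rfl fun d _ => (supp_eq_sum hbal.1.2.1 d).symm
        _ ≤ L.card * (a * tstar) := by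
            rw [← nsmul_eq_mul]
            exact Finset.sum_le_card_nsmul _ _ _ fun d hd => (Finset.mem_filter.mp hd).2.le
    have hdisj : Disjoint (Astar \ A) (Astar ∩ L) := by
      rw [Finset.disjoint_left]
      intro c h1 h2
      exact (Finset.mem_sdiff.mp h1).2
        (Finset.mem_filter.mp (Finset.mem_inter.mp h2).2).1
    have hrow : ∀ n, ∑ c ∈ (Astar \ A) ∪ (Astar ∩ L), wstar n c
        ≤ (if n ∈ Na then s n else 0) + (if n ∈ M then s n else 0) := by
      intro n
      have hNa0 : (0 : ℝ) ≤ if n ∈ Na then s n else 0 := by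
        split_ifs
        exacts [hs n, le_rfl]
      by_cases hnM : n ∈ M
      · rw [if_pos hnM]
        linarith [hwstar.sum_subset_le n ((Astar \ A) ∪ (Astar ∩ L))]
      have hnL : ∀ c ∈ L, ¬ edge n c := fun c hc hnc =>
        hnM (Finset.mem_filter.mpr ⟨Finset.mem_univ n, c, hc, hnc⟩)
      by_cases hnN : n ∈ Na
      · rw [if_pos hnN, if_neg hnM]
        linarith [hwstar.sum_subset_le n ((Astar \ A) ∪ (Astar ∩ L))]
      · rw [if_neg hnN, if_neg hnM, add_zero]
        refine (Finset.sum_eq_zero fun c hc => hwstar.2.1 n c fun hnc => ?_).le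
        rcases Finset.mem_union.mp hc with hc | hc
        · refine hnN (Finset.mem_filter.mpr ⟨Finset.mem_univ n, ⟨c, hc, hnc⟩, fun d hd => ?_⟩)
          obtain ⟨hdA, hdn⟩ := Finset.mem_inter.mp hd
          by_contra! hlt
          exact hnL d (Finset.mem_filter.mpr ⟨hdA, hlt⟩) (Finset.mem_filter.mp hdn).2
        · exact hnL c (Finset.mem_inter.mp hc).2 hnc
    have htot : (((Astar \ A).card : ℝ) + (Astar ∩ L).card) * tstar
        ≤ ∑ n ∈ Na, s n + ∑ n ∈ M, s n := by
      calc (((Astar \ A).card : ℝ) + (Astar ∩ L).card) * tstar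
          ≤ ∑ c ∈ (Astar \ A) ∪ (Astar ∩ L), supp edge wstar c := by
            rw [← Nat.cast_add, ← Finset.card_union_of_disjoint hdisj, ← nsmul_eq_mul]
            refine Finset.card_nsmul_le_sum _ _ _ fun c hc => ht c ?_
            rcases Finset.mem_union.mp hc with hc | hc
            exacts [(Finset.mem_sdiff.mp hc).1, (Finset.mem_inter.mp hc).1]
        _ = ∑ n, ∑ c ∈ (Astar \ A) ∪ (Astar ∩ L), wstar n c := by
            rw [Finset.sum_comm]
            exact Finset.sum_congr rfl fun c _ => supp_eq_sum hwstar.2.1 c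
        _ ≤ ∑ n, ((if n ∈ Na then s n else 0) + (if n ∈ M then s n else 0)) :=
            Finset.sum_le_sum fun n _ => hrow n
        _ = ∑ n ∈ Na, s n + ∑ n ∈ M, s n := by
            rw [Finset.sum_add_distrib]
            simp only [Finset.sum_ite_mem, Finset.univ_inter]
    have hcard : L.card ≤ (Astar \ A).card + (Astar ∩ L).card := by
      have h1 : (L \ Astar).card ≤ (A \ Astar).card :=
        Finset.card_le_card (Finset.sdiff_subset_sdiff (Finset.filter_subset _ _) le_rfl)
      have h2 := Finset.card_sdiff_add_card_inter L Astar
      have h3 := Finset.card_sdiff_add_card_inter A Astar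
      have h4 := Finset.card_sdiff_add_card_inter Astar A
      rw [Finset.inter_comm L] at h2
      rw [Finset.inter_comm A] at h3
      omega
    have hcard' : (L.card : ℝ) ≤ (Astar \ A).card + (Astar ∩ L).card := by exact_mod_cast hcard
    have h1 := mul_le_mul_of_nonneg_right hcard' (mul_nonneg ha0 ht0)
    have h2 : 0 ≤ ((Astar ∩ L).card : ℝ) * ((1 - a) * tstar) :=
      mul_nonneg (Nat.cast_nonneg _) (mul_nonneg (by linarith) ht0)
    linarith
  · intro b hab _
    refine ⟨fun n hn => ?_, fun n hn => ?_⟩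
    · obtain ⟨_, h1, h2⟩ := Finset.mem_filter.mp hn
      exact Finset.mem_filter.mpr ⟨Finset.mem_univ n, h1, fun c hc =>
        (mul_le_mul_of_nonneg_right hab ht0).trans (h2 c hc)⟩
    · obtain ⟨_, h1, _⟩ := Finset.mem_filter.mp hn
      exact ⟨fun h => (Finset.mem_filter.mp h).2.2,
        fun h => Finset.mem_filter.mpr ⟨Finset.mem_univ n, h1, h⟩⟩
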